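/- Fundamental lemma of non-disjointness: Let T and S be invertible measure-preserving transformations of standard Borel probability spaces (X, 𝒜, μ) and (Y, ℬ, ν). If T and S are not disjoint (i.e., there exists a joining λ of T and S with λ ≠ μ ⊗ ν), then S has a non-trivial common factor with a joining of a countable family of copies of T: there exist a probability measure λ∞ on X^ℕ which is invariant under the coordinatewise map (x_n)_n ↦ (T x_n)_n and whose marginal on each coordinate is μ, a standard Borel probability space (Z, 𝒞, ρ) with ρ not a Dirac mass, an invertible measure-preserving transformation R of (Z, 𝒞, ρ), and measurable maps φ : Y → Z and ψ : X^ℕ → Z with φ∗ν = ρ, ψ∗λ∞ = ρ, φ ∘ S = R ∘ φ ν-a.e., and ψ ∘ T^{(∞)} = R ∘ ψ λ∞-a.e., where T^{(∞)} denotes the coordinatewise action of T on X^ℕ. -/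

import Mathlib

open MeasureTheory Set

/-!
Disintegrate the joining as `ν ⊗ₘ κ`, with fibre measures `κ y` on `X`, and let the product measure
`(κ y)^ℕ` sit over each `y : Y`. The fibre measures are equivariant, so averaging `(κ y)^ℕ` over `y`
gives a joining of copies of `T`, itself joined to `S`. If the joining is not the product measure,
some function `y ↦ κ y A` is not almost everywhere constant. By the strong law of large numbers,
`κ y A` is also the asymptotic frequency of visits to `A` of a `(κ y)^ℕ`-random sequence, so it is a
function of the sequence as well as of `y`. The values of these two functions along the respective
orbits generate the common factor.
-/

section

open ProbabilityTheory Filter Function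

variable {X Y W : Type*} [MeasurableSpace X] [MeasurableSpace Y] [MeasurableSpace W]

/-! ### Joinings and common factors -/

/-- `lam` is a joining of the systems `(X, μ, T)` and `(Y, ν, S)`: an invariant measure on the
product with marginals `μ` and `ν`. The marginals are encoded by measure-preserving projections. -/
structure IsJoining (T : X → X) (S : Y → Y) (μ : Measure X) (ν : Measure Y)
    (lam : Measure (X × Y)) : Prop where
  measurePreserving_fst : MeasurePreserving Prod.fst lam μ
  measurePreserving_snd : MeasurePreserving Prod.snd lam ν
  measurePreserving_prodMap : MeasurePreserving (Prod.map T S) lam lam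

/-- The systems `(X, μ, T)` and `(Y, ν, S)` have a common factor `(Z, ρ, R)`, standard Borel,
invertible and not reduced to a point. The factor maps are required to be equivariant everywhere
rather than almost everywhere. -/
def HasNontrivialCommonFactor (T : X → X) (S : Y → Y) (μ : Measure X) (ν : Measure Y) : Prop :=
  ∃ (Z : Type) (_ : MeasurableSpace Z) (_ : StandardBorelSpace Z) (ρ : Measure Z) (R : Z ≃ᵐ Z)
    (φ : X → Z) (ψ : Y → Z),
    IsProbabilityMeasure ρ ∧ (∀ z, ρ ≠ Measure.dirac z) ∧ MeasurePreserving R ρ ρ ∧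
    MeasurePreserving φ μ ρ ∧ Semiconj φ T R ∧ MeasurePreserving ψ ν ρ ∧ Semiconj ψ S R

namespace IsJoining

variable {T : X → X} {S : Y → Y} {μ : Measure X} {ν : Measure Y} {lam : Measure (X × Y)}

theorem measurePreserving_left (h : IsJoining T S μ ν lam) (hT : Measurable T) :
    MeasurePreserving T μ μ :=
  h.measurePreserving_fst.of_semiconj h.measurePreserving_prodMap (fun _ => rfl) hT

theorem measurePreserving_right (h : IsJoining T S μ ν lam) (hS : Measurable S) :
    MeasurePreserving S ν ν :=
  h.measurePreserving_snd.of_semiconj h.measurePreserving_prodMap (fun _ => rfl) hS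

theorem swap (h : IsJoining T S μ ν lam) : IsJoining S T ν μ (lam.map Prod.swap) where
  measurePreserving_fst :=
    .map_of_comp (f := Prod.swap) h.measurePreserving_snd measurable_fst measurable_swap
  measurePreserving_snd :=
    .map_of_comp (f := Prod.swap) h.measurePreserving_fst measurable_snd measurable_swap
  measurePreserving_prodMap :=
    have hswap : MeasurePreserving Prod.swap lam (lam.map Prod.swap) :=
      measurable_swap.measurePreserving lam
    hswap.of_semiconj h.measurePreserving_prodMap (fun _ => rfl) <|
      measurable_swap.comp <| h.measurePreserving_prodMap.measurable.comp measurable_swap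

end IsJoining

/-! ### Itineraries -/

section Itinerary

variable {β : Type*}

/-- The two-sided shift on sequences with values in `β`. -/
def shiftEquiv (β : Type*) [MeasurableSpace β] : (ℤ → β) ≃ᵐ (ℤ → β) :=
  MeasurableEquiv.arrowCongr' (Equiv.subRight 1) (MeasurableEquiv.refl β)

theorem shiftEquiv_apply [MeasurableSpace β] (z : ℤ → β) (k : ℤ) : shiftEquiv β z k = z (k + 1) :=
  rfl

/-- The sequence of values of the observable `f` along the orbit of `x` under `e`. It maps the
system of `e` to the two-sided shift. -/
def itinerary (e : X ≃ᵐ X) (f : X → β) (x : X) (k : ℤ) : β :=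
  f ((e.toEquiv ^ k : Equiv.Perm X) x)

theorem measurable_zpow_toEquiv (e : X ≃ᵐ X) (k : ℤ) :
    Measurable (e.toEquiv ^ k : Equiv.Perm X) := by
  induction k using Int.induction_on with
  | zero => exact measurable_id
  | succ n ih => rw [zpow_add_one]; exact ih.comp e.measurable
  | pred n ih => rw [zpow_sub_one]; exact ih.comp e.symm.measurable

theorem measurePreserving_zpow_toEquiv {e : X ≃ᵐ X} {μ : Measure X} (he : MeasurePreserving e μ μ)
    (k : ℤ) : MeasurePreserving (e.toEquiv ^ k : Equiv.Perm X) μ μ := by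
  induction k using Int.induction_on with
  | zero => exact MeasurePreserving.id μ
  | succ n ih => rw [zpow_add_one]; exact ih.comp he
  | pred n ih => rw [zpow_sub_one]; exact ih.comp (he.symm e)

theorem semiconj_perm_zpow {X Y : Type*} {p : X → Y} {e : Equiv.Perm X} {e' : Equiv.Perm Y}
    (h : Semiconj p e e') (k : ℤ) :
    Semiconj p (e ^ k : Equiv.Perm X) (e' ^ k : Equiv.Perm Y) := by
  induction k using Int.induction_on with
  | zero => exact fun _ => rfl
  | succ n ih => rw [zpow_add_one, zpow_add_one]; exact ih.comp_right h
  | pred n ih =>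
    rw [zpow_sub_one, zpow_sub_one]
    exact ih.comp_right (h.inverses_right e.right_inv e'.left_inv)

theorem measurable_itinerary [MeasurableSpace β] (e : X ≃ᵐ X) {f : X → β} (hf : Measurable f) :
    Measurable (itinerary e f) :=
  measurable_pi_lambda _ fun k => hf.comp (measurable_zpow_toEquiv e k)

theorem semiconj_itinerary_shiftEquiv [MeasurableSpace β] (e : X ≃ᵐ X) (f : X → β) :
    Semiconj (itinerary e f) e (shiftEquiv β) := by
  intro x
  ext k
  rw [shiftEquiv_apply, itinerary, itinerary, zpow_add_one]
  rfl

theorem itinerary_comp_of_semiconj {e : X ≃ᵐ X} {e' : Y ≃ᵐ Y} {p : X → Y} (h : Semiconj p e e')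
    (f : Y → β) : itinerary e (f ∘ p) = itinerary e' f ∘ p := by
  ext x k
  exact congrArg f (semiconj_perm_zpow (e := e.toEquiv) (e' := e'.toEquiv) h k x)

theorem itinerary_ae_eq {e : X ≃ᵐ X} {μ : Measure X} (he : MeasurePreserving e μ μ)
    {f g : X → β} (hfg : f =ᵐ[μ] g) : itinerary e f =ᵐ[μ] itinerary e g := by
  have hcoord (k : ℤ) : ∀ᵐ x ∂μ, itinerary e f x k = itinerary e g x k :=
    (measurePreserving_zpow_toEquiv he k).quasiMeasurePreserving.ae hfg
  filter_upwards [ae_all_iff.2 hcoord] with x hx using funext hx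

theorem map_itinerary_ne_dirac [MeasurableSpace β] [MeasurableSingletonClass β] (e : X ≃ᵐ X)
    {μ : Measure X} {f : X → β} (hf : Measurable f) (hfc : ¬ EventuallyConst f (ae μ)) (z : ℤ → β) :
    μ.map (itinerary e f) ≠ Measure.dirac z := by
  intro hz
  have hconst : ∀ᵐ w ∂μ.map (itinerary e f), w 0 = z 0 := by
    simp only [hz, ae_dirac_eq, eventually_pure]
  have : Nonempty β := ⟨z 0⟩
  exact hfc <| eventuallyConst_iff_exists_eventuallyEq.2
    ⟨z 0, ae_of_ae_map (measurable_itinerary e hf).aemeasurable hconst⟩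

/-- The factors of the two systems generated by `f` and `g` are identified by the joining. -/
theorem IsJoining.hasNontrivialCommonFactor {β : Type} [MeasurableSpace β] [StandardBorelSpace β]
    {S : X ≃ᵐ X} {V : Y ≃ᵐ Y} {μ : Measure X} {ν : Measure Y} [IsProbabilityMeasure μ]
    {lam : Measure (X × Y)} (h : IsJoining S V μ ν lam) {f : X → β} {g : Y → β}
    (hf : Measurable f) (hg : Measurable g) (hfc : ¬ EventuallyConst f (ae μ))
    (hfg : f ∘ Prod.fst =ᵐ[lam] g ∘ Prod.snd) : HasNontrivialCommonFactor S V μ ν := by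
  have hφ : MeasurePreserving (itinerary S f) μ (μ.map (itinerary S f)) :=
    (measurable_itinerary S hf).measurePreserving μ
  have hφψ : itinerary S f ∘ Prod.fst =ᵐ[lam] itinerary V g ∘ Prod.snd := by
    have hfst : Semiconj Prod.fst (S.prodCongr V) S := fun _ => rfl
    have hsnd : Semiconj Prod.snd (S.prodCongr V) V := fun _ => rfl
    rw [← itinerary_comp_of_semiconj hfst, ← itinerary_comp_of_semiconj hsnd]
    exact itinerary_ae_eq h.measurePreserving_prodMap hfg
  have hψ : MeasurePreserving (itinerary V g) ν (μ.map (itinerary S f)) := by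
    refine ⟨measurable_itinerary V hg, ?_⟩
    rw [← h.measurePreserving_snd.map_eq,
      Measure.map_map (measurable_itinerary V hg) measurable_snd, ← Measure.map_congr hφψ,
      (hφ.comp h.measurePreserving_fst).map_eq]
  exact ⟨ℤ → β, inferInstance, inferInstance, μ.map (itinerary S f), shiftEquiv β, itinerary S f,
    itinerary V g, Measure.isProbabilityMeasure_map hφ.aemeasurable,
    map_itinerary_ne_dirac S hf hfc,
    hφ.of_semiconj (h.measurePreserving_left S.measurable) (semiconj_itinerary_shiftEquiv S f)
      (shiftEquiv β).measurable,
    hφ, semiconj_itinerary_shiftEquiv S f, hψ, semiconj_itinerary_shiftEquiv V g⟩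

end Itinerary

/-! ### Disintegrated joinings -/

section Disintegration

variable {ν : Measure Y}

theorem map_prodMap_compProd {Y' W' : Type*} [MeasurableSpace Y'] [MeasurableSpace W']
    {ν' : Measure Y'} [SFinite ν] [SFinite ν'] {κ : Kernel Y W} {κ' : Kernel Y' W'}
    [IsSFiniteKernel κ] [IsSFiniteKernel κ'] {S : Y → Y'} (hS : MeasurePreserving S ν ν')
    {V : W → W'} (hV : Measurable V) (h : ∀ᵐ y ∂ν, (κ y).map V = κ' (S y)) :
    (ν ⊗ₘ κ).map (Prod.map S V) = ν' ⊗ₘ κ' := by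
  have hSV : Measurable (Prod.map S V) := hS.measurable.prodMap hV
  ext s hs
  rw [Measure.map_apply hSV hs, Measure.compProd_apply (hSV hs), Measure.compProd_apply hs,
    ← hS.lintegral_comp (Kernel.measurable_kernel_prodMk_left hs)]
  refine lintegral_congr_ae ?_
  filter_upwards [h] with y hy
  rw [← hy, Measure.map_apply hV (measurable_prodMk_left hs)]
  rfl

theorem ae_map_eq_of_map_prodMap_compProd {Y' W' : Type*} [MeasurableSpace Y'] [MeasurableSpace W']
    [MeasurableSpace.CountablyGenerated W'] {ν' : Measure Y'} [IsFiniteMeasure ν]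
    {κ : Kernel Y W} {κ' : Kernel Y' W'} [IsFiniteKernel κ] [IsFiniteKernel κ']
    {S : Y ≃ᵐ Y'} (hS : MeasurePreserving S ν ν') {V : W → W'} (hV : Measurable V)
    (h : (ν ⊗ₘ κ).map (Prod.map S V) = ν' ⊗ₘ κ') : ∀ᵐ y ∂ν, (κ y).map V = κ' (S y) := by
  have : SFinite ν' := hS.sfinite
  have hcompProd : ν ⊗ₘ κ.map V = ν ⊗ₘ κ'.comap S S.measurable :=
    calc ν ⊗ₘ κ.map V
      _ = (ν ⊗ₘ κ).map (Prod.map id V) := Measure.compProd_map hV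
      _ = ((ν ⊗ₘ κ).map (Prod.map S V)).map (Prod.map S.symm id) := by
        rw [Measure.map_map (S.symm.measurable.prodMap measurable_id)
          (S.measurable.prodMap hV), Prod.map_comp_map, S.symm_comp_self, id_comp]
      _ = (ν' ⊗ₘ κ').map (Prod.map S.symm id) := by rw [h]
      _ = ν ⊗ₘ κ'.comap S S.measurable :=
        map_prodMap_compProd (hS.symm S) measurable_id (.of_forall fun y => by simp)
  filter_upwards [Kernel.ae_eq_of_compProd_eq hcompProd] with y hy
  rwa [Kernel.map_apply _ hV, Kernel.comap_apply] at hy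

theorem isJoining_compProd [SFinite ν] {κ : Kernel Y W} [IsMarkovKernel κ] {S : Y → Y}
    (hS : MeasurePreserving S ν ν) {V : W → W} (hV : Measurable V)
    (h : ∀ᵐ y ∂ν, (κ y).map V = κ (S y)) : IsJoining S V ν (κ ∘ₘ ν) (ν ⊗ₘ κ) where
  measurePreserving_fst := ⟨measurable_fst, Measure.fst_compProd ν κ⟩
  measurePreserving_snd := ⟨measurable_snd, Measure.snd_compProd ν κ⟩
  measurePreserving_prodMap := ⟨hS.measurable.prodMap hV, map_prodMap_compProd hS hV h⟩

theorem IsJoining.exists_markovKernel [StandardBorelSpace X] {T : X ≃ᵐ X} {S : Y ≃ᵐ Y}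
    {μ : Measure X} [IsProbabilityMeasure ν] {lam : Measure (Y × X)}
    (h : IsJoining S T ν μ lam) :
    ∃ κ : Kernel Y X, IsMarkovKernel κ ∧ ν ⊗ₘ κ = lam ∧ κ ∘ₘ ν = μ ∧
      ∀ᵐ y ∂ν, (κ y).map T = κ (S y) := by
  have hfst : lam.fst = ν := h.measurePreserving_fst.map_eq
  have : IsProbabilityMeasure lam := h.measurePreserving_fst.hasLaw.isProbabilityMeasure
  have : Nonempty X := (nonempty_of_isProbabilityMeasure lam).map Prod.snd
  have hlam : ν ⊗ₘ lam.condKernel = lam := by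
    simpa only [hfst] using lam.disintegrate lam.condKernel
  refine ⟨lam.condKernel, inferInstance, hlam, ?_, ?_⟩
  · rw [← Measure.snd_compProd, hlam]
    exact h.measurePreserving_snd.map_eq
  · refine ae_map_eq_of_map_prodMap_compProd (h.measurePreserving_left S.measurable) T.measurable ?_
    rw [hlam]
    exact h.measurePreserving_prodMap.map_eq

theorem compProd_eq_prod_of_eventuallyConst {κ : Kernel Y X} [IsMarkovKernel κ]
    [IsProbabilityMeasure ν]
    (h : ∀ A, MeasurableSet A → EventuallyConst (fun y => (κ y).real A) (ae ν)) :
    ν ⊗ₘ κ = ν.prod (κ ∘ₘ ν) := by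
  refine (Measure.prod_eq fun B A hB hA => ?_).symm
  obtain ⟨c, hc⟩ := eventuallyConst_iff_exists_eventuallyEq.1 (h A hA)
  have hκA : (fun y => κ y A) =ᵐ[ν] fun _ => ENNReal.ofReal c := by
    filter_upwards [hc] with y hy
    rw [← hy, ofReal_measureReal]
  rw [Measure.compProd_apply_prod hB hA, Measure.bind_apply hA κ.aemeasurable,
    lintegral_congr_ae hκA, lintegral_congr_ae (ae_restrict_of_ae hκA)]
  simp [mul_comm]

end Disintegration

/-! ### Conditionally independent sequences -/

section InfinitePi

variable {ι : Type*} {Ω : ι → Type*} [∀ i, MeasurableSpace (Ω i)]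

/-- The kernel sending `y` to the product over `i` of the measures `κ i y`. It is the conditional
law, given `y`, of random variables that are conditionally independent over `Y`. -/
noncomputable def infinitePiKernel (κ : ∀ i, Kernel Y (Ω i)) [∀ i, IsMarkovKernel (κ i)] :
    Kernel Y (∀ i, Ω i) where
  toFun y := Measure.infinitePi fun i => κ i y
  measurable' := by
    refine Measurable.measure_of_isPiSystem_of_isProbabilityMeasure
      generateFrom_squareCylinders.symm
      (isPiSystem_squareCylinders (fun _ => MeasurableSpace.isPiSystem_measurableSet) (by simp)) ?_
    rintro _ ⟨s, t, ht, rfl⟩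
    have ht' (i) : MeasurableSet (t i) := ht i (mem_univ i)
    simp_rw [Measure.infinitePi_pi (fun i => κ i _) fun i (_ : i ∈ s) => ht' i]
    exact Finset.measurable_fun_prod _ fun i _ => (κ i).measurable_coe (ht' i)

theorem infinitePiKernel_apply (κ : ∀ i, Kernel Y (Ω i)) [∀ i, IsMarkovKernel (κ i)] (y : Y) :
    infinitePiKernel κ y = Measure.infinitePi fun i => κ i y :=
  rfl

instance (κ : ∀ i, Kernel Y (Ω i)) [∀ i, IsMarkovKernel (κ i)] :
    IsMarkovKernel (infinitePiKernel κ) :=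
  ⟨fun y => by rw [infinitePiKernel_apply]; infer_instance⟩

theorem measurePreserving_eval_infinitePiKernel_comp (κ : ∀ i, Kernel Y (Ω i))
    [∀ i, IsMarkovKernel (κ i)] (ν : Measure Y) (i : ι) :
    MeasurePreserving (eval i) (infinitePiKernel κ ∘ₘ ν) (κ i ∘ₘ ν) := by
  have heval : (infinitePiKernel κ).map (eval i) = κ i := by
    ext1 y
    rw [Kernel.map_apply _ (measurable_pi_apply i)]
    exact Measure.infinitePi_map_eval (fun i => κ i y) i
  exact ⟨measurable_pi_apply i, by rw [Measure.map_comp _ _ (measurable_pi_apply i), heval]⟩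

theorem map_piMap_infinitePiKernel_apply {Y' : Type*} {Ω' : ι → Type*} [MeasurableSpace Y']
    [∀ i, MeasurableSpace (Ω' i)] {κ : ∀ i, Kernel Y (Ω i)} [∀ i, IsMarkovKernel (κ i)]
    {κ' : ∀ i, Kernel Y' (Ω' i)} [∀ i, IsMarkovKernel (κ' i)] {T : ∀ i, Ω i → Ω' i}
    (hT : ∀ i, Measurable (T i)) {y : Y} {y' : Y'} (h : ∀ i, (κ i y).map (T i) = κ' i y') :
    (infinitePiKernel κ y).map (Pi.map T) = infinitePiKernel κ' y' := by
  simp_rw [infinitePiKernel_apply, ← h]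
  exact Measure.infinitePi_map_pi (fun i => κ i y) hT

/-- The limit of the averages of `f` along the sequence `x`. It is encoded as an upper limit, to be
measurable in `x`, and is meaningful only where the averages converge. -/
noncomputable def limitingMean (f : X → ℝ) (x : ℕ → X) : ℝ :=
  limsup (fun n : ℕ => (∑ i ∈ Finset.range n, f (x i)) / n) atTop

theorem measurable_limitingMean {f : X → ℝ} (hf : Measurable f) : Measurable (limitingMean f) :=
  Measurable.limsup fun _ => by fun_prop

theorem limitingMean_ae_eq_integral {P : Measure X} [IsProbabilityMeasure P] {f : X → ℝ}
    (hf : Measurable f) (hfP : Integrable f P) :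
    ∀ᵐ x ∂Measure.infinitePi (fun _ : ℕ => P), limitingMean f x = ∫ a, f a ∂P := by
  have heval (i : ℕ) : MeasurePreserving (eval i) (Measure.infinitePi fun _ : ℕ => P) P :=
    measurePreserving_eval_infinitePi (fun _ => P) i
  have hslln := strong_law_ae_real (μ := Measure.infinitePi fun _ : ℕ => P)
    (fun i x => f (x i)) ((heval 0).integrable_comp_of_integrable hfP)
    (fun i j hij => (iIndepFun_infinitePi fun _ => hf).indepFun hij)
    (fun i => ((heval i).hasLaw.identDistrib (heval 0).hasLaw).comp hf)
  have hmean : ∫ x, f (x 0) ∂Measure.infinitePi (fun _ : ℕ => P) = ∫ a, f a ∂P :=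
    (heval 0).hasLaw.integral_comp hf.aestronglyMeasurable
  filter_upwards [hslln] with x hx
  rw [limitingMean, hx.limsup_eq, hmean]

theorem limitingMean_ae_eq_integral_kernel {ν : Measure Y} [SFinite ν] {κ : Kernel Y X}
    [IsMarkovKernel κ] {f : X → ℝ} (hf : Measurable f) (hfκ : ∀ y, Integrable f (κ y)) :
    ∀ᵐ p ∂(ν ⊗ₘ infinitePiKernel fun _ : ℕ => κ), limitingMean f p.2 = ∫ a, f a ∂κ p.1 := by
  refine (Measure.ae_compProd_iff ?_).2 <|
    .of_forall fun y => limitingMean_ae_eq_integral hf (hfκ y)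
  exact measurableSet_eq_fun ((measurable_limitingMean hf).comp measurable_snd)
    (hf.stronglyMeasurable.integral_kernel.measurable.comp measurable_fst)

end InfinitePi

theorem nontrivial_common_factor_of_not_disjoint_general [StandardBorelSpace X]
    {μ : Measure X} {ν : Measure Y} [IsProbabilityMeasure ν] {T : X ≃ᵐ X} {S : Y ≃ᵐ Y}
    {lam : Measure (X × Y)} (h : IsJoining T S μ ν lam) (hne : lam ≠ μ.prod ν) :
    ∃ lamInf : Measure (ℕ → X),
      MeasurePreserving (Pi.map fun _ => T) lamInf lamInf ∧
      (∀ n, MeasurePreserving (eval n) lamInf μ) ∧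
      HasNontrivialCommonFactor S (Pi.map fun _ : ℕ => T) ν lamInf := by
  obtain ⟨κ, _, hκ, rfl, hequiv⟩ := h.swap.exists_markovKernel
  obtain ⟨A, hA, hAc⟩ :
      ∃ A, MeasurableSet A ∧ ¬ EventuallyConst (fun y => (κ y).real A) (ae ν) := by
    by_contra! hconst
    refine hne ?_
    rw [← Measure.prod_swap, ← compProd_eq_prod_of_eventuallyConst hconst, hκ,
      Measure.map_map measurable_swap measurable_swap, Prod.swap_swap_eq, Measure.map_id]
  have hjoin : IsJoining S (MeasurableEquiv.piCongrRight fun _ : ℕ => T) ν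
      (infinitePiKernel (fun _ => κ) ∘ₘ ν) (ν ⊗ₘ infinitePiKernel fun _ => κ) :=
    isJoining_compProd (h.measurePreserving_right S.measurable) (MeasurableEquiv.measurable _) <|
      hequiv.mono fun _ hy => map_piMap_infinitePiKernel_apply (fun _ => T.measurable) fun _ => hy
  have hfreq : ∀ᵐ p ∂(ν ⊗ₘ infinitePiKernel fun _ : ℕ => κ),
      (κ p.1).real A = limitingMean (A.indicator 1) p.2 := by
    filter_upwards [limitingMean_ae_eq_integral_kernel (measurable_one.indicator hA)
      fun _ => (integrable_const 1).indicator hA] with p hp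
    rw [hp, integral_indicator_one hA]
  exact ⟨_, hjoin.measurePreserving_right (MeasurableEquiv.measurable _),
    measurePreserving_eval_infinitePiKernel_comp _ ν,
    hjoin.hasNontrivialCommonFactor (κ.measurable_coe hA).ennreal_toReal
      (measurable_limitingMean (measurable_one.indicator hA)) hAc hfreq⟩

end

/-- Fundamental lemma of non-disjointness: if `T` and `S` are not disjoint, then `S`
has a non-trivial common factor with some joining of countably many copies of `T`. -/
theorem nontrivial_common_factor_of_not_disjoint
    {X Y : Type*} [MeasurableSpace X] [StandardBorelSpace X]
    [MeasurableSpace Y] [StandardBorelSpace Y]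
    (μ : Measure X) (ν : Measure Y) [IsProbabilityMeasure μ] [IsProbabilityMeasure ν]
    (T : X ≃ᵐ X) (S : Y ≃ᵐ Y)
    (hT : MeasurePreserving T μ μ) (hS : MeasurePreserving S ν ν)
    -- `T` and `S` are not disjoint: some joining differs from the product measure.
    (lam : Measure (X × Y))
    (h1 : lam.map Prod.fst = μ)
    (h2 : lam.map Prod.snd = ν)
    (hinv : MeasurePreserving (Prod.map T S) lam lam)
    (hne : lam ≠ μ.prod ν) :
    ∃ (lamInf : Measure (ℕ → X)) (Z : Type) (_ : MeasurableSpace Z) (_ : StandardBorelSpace Z)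
      (ρ : Measure Z) (R : Z ≃ᵐ Z) (φ : Y → Z) (ψ : (ℕ → X) → Z),
      IsProbabilityMeasure lamInf ∧
      -- `lamInf` is a joining of countably many copies of `T`:
      MeasurePreserving (fun x : ℕ → X => fun n => T (x n)) lamInf lamInf ∧
      (∀ n : ℕ, lamInf.map (fun x : ℕ → X => x n) = μ) ∧
      -- `(Z, ρ, R)` is a non-trivial system:
      IsProbabilityMeasure ρ ∧
      (∀ z : Z, ρ ≠ Measure.dirac z) ∧
      MeasurePreserving R ρ ρ ∧
      -- it is a factor of `S`:
      Measurable φ ∧ ν.map φ = ρ ∧ (∀ᵐ y ∂ν, φ (S y) = R (φ y)) ∧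
      -- and a factor of the joining of the copies of `T`:
      Measurable ψ ∧ lamInf.map ψ = ρ ∧
      (∀ᵐ x ∂lamInf, ψ (fun n => T (x n)) = R (ψ x)) := by
  obtain ⟨lamInf, hTinv, hmarg, Z, mZ, sZ, ρ, R, φ, ψ, hρ, hnd, hR, hφ, hφS, hψ, hψT⟩ :=
    nontrivial_common_factor_of_not_disjoint_general
      ⟨⟨measurable_fst, h1⟩, ⟨measurable_snd, h2⟩, hinv⟩ hne
  exact ⟨lamInf, Z, mZ, sZ, ρ, R, φ, ψ, (hmarg 0).hasLaw.isProbabilityMeasure, hTinv,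
    fun n => (hmarg n).map_eq, hρ, hnd, hR, hφ.measurable, hφ.map_eq, .of_forall hφS,
    hψ.measurable, hψ.map_eq, .of_forall hψT⟩
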